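/- There is an absolute constant C ≥ 1 such that the following holds. Let p ∈ (0,1/2], K ≥ 1, and let f : {0,1}^n → {0,1} be a Boolean function with p·I[f] < K·μ_p(f). Then there is a set J ⊆ [n] with |J| ≤ C·K such that μ_p(f_{J→1}) ≥ e^{−C·K}. -/

import Mathlib

open Finset

namespace GlobalHC

variable {n : ℕ}

/-- Expectation with respect to the `p`-biased measure on `{0,1}^n`. -/
noncomputable def Ep (p : ℝ) (f : (Fin n → Bool) → ℝ) : ℝ :=
  ∑ x : Fin n → Bool, (∏ i, if x i then p else 1 - p) * f x

/-- The `r`-norm with respect to the `p`-biased measure. -/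
noncomputable def pnorm (p r : ℝ) (f : (Fin n → Bool) → ℝ) : ℝ :=
  (Ep p fun x => |f x| ^ r) ^ (1 / r)

/-- The `p`-biased character `χ_S`. -/
noncomputable def chi (p : ℝ) (S : Finset (Fin n)) (x : Fin n → Bool) : ℝ :=
  ∏ i ∈ S, ((if x i then (1 : ℝ) else 0) - p) / Real.sqrt (p * (1 - p))

/-- The `p`-biased Fourier coefficient `f̂(S)`. -/
noncomputable def coeff (p : ℝ) (f : (Fin n → Bool) → ℝ) (S : Finset (Fin n)) : ℝ :=
  Ep p fun x => f x * chi p S x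

/-- The derivative `D_S f = Σ_{T ⊇ S} f̂(T) χ_{T∖S}`. -/
noncomputable def derivS (p : ℝ) (S : Finset (Fin n)) (f : (Fin n → Bool) → ℝ) :
    (Fin n → Bool) → ℝ :=
  fun x => ∑ T ∈ Finset.univ.filter (fun T => S ⊆ T), coeff p f T * chi p (T \ S) x

/-- The generalised influence `I_S(f) = σ^{-2|S|} Σ_{T ⊇ S} f̂(T)²`. -/
noncomputable def genInf (p : ℝ) (S : Finset (Fin n)) (f : (Fin n → Bool) → ℝ) : ℝ :=
  (∑ T ∈ Finset.univ.filter (fun T => S ⊆ T), coeff p f T ^ 2) / (p * (1 - p)) ^ S.card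

/-- The noise operator `T_ρ f = Σ_S ρ^{|S|} f̂(S) χ_S`. -/
noncomputable def noise (p ρ : ℝ) (f : (Fin n → Bool) → ℝ) : (Fin n → Bool) → ℝ :=
  fun x => ∑ S : Finset (Fin n), ρ ^ S.card * coeff p f S * chi p S x

/-- The degree-`r` truncation `f^{≤ r}`. -/
noncomputable def trunc (p : ℝ) (r : ℕ) (f : (Fin n → Bool) → ℝ) : (Fin n → Bool) → ℝ :=
  fun x => ∑ S ∈ Finset.univ.filter (fun S : Finset (Fin n) => S.card ≤ r),
    coeff p f S * chi p S x

/-- The restriction `f_{J→1}` setting all coordinates in `J` to `1`. -/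
def restrict1 (J : Finset (Fin n)) (f : (Fin n → Bool) → ℝ) : (Fin n → Bool) → ℝ :=
  fun x => f (fun i => if i ∈ J then true else x i)

/-- `f` is `(r,δ)`-global (for the `p`-biased measure). -/
def IsGlobal (p r δ : ℝ) (f : (Fin n → Bool) → ℝ) : Prop :=
  ∀ J : Finset (Fin n), (J.card : ℝ) ≤ r → Ep p (restrict1 J f) ≤ Ep p f + δ

/-- The total influence `I[f] = Σ_i Pr_{μ_p}[f(x ⊕ e_i) ≠ f(x)]`. -/
noncomputable def totalInf (p : ℝ) (f : (Fin n → Bool) → ℝ) : ℝ :=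
  ∑ i : Fin n, Ep p fun x => if f (Function.update x i (!x i)) = f x then 0 else 1

/-- Noise stability `Stab_ρ(f) = Σ_S ρ^{|S|} f̂(S)²` (w.r.t. `μ_p`). -/
noncomputable def stab (p ρ : ℝ) (f : (Fin n → Bool) → ℝ) : ℝ :=
  ∑ S : Finset (Fin n), ρ ^ S.card * coeff p f S ^ 2

/-- `f` is monotone. -/
def Mono (f : (Fin n → Bool) → ℝ) : Prop :=
  ∀ x y : Fin n → Bool, (∀ i, x i ≤ y i) → f x ≤ f y

/-!
Let `σ² = p (1 - p)` and suppose `E f_{J→1} ≤ ε` for all `|J| ≤ d`. Differentiating one coordinate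
at a time bounds the generalised influences: each derivative is a difference of two restrictions,
setting a coordinate to `1` is covered by the assumption, and setting it to `0` loses only a factor
`1 / (1 - p)`. A coordinatewise induction gives the hypercontractive inequality
`E[(T_{1/2} h)⁴] ≤ ∑_S σ^{2|S|} I_S(h)²`, so small generalised influences make the fourth moment of
`f^{≤ d}` small. By Hölder, `W = E[f f^{≤ d}]` satisfies `W⁴ ≤ (E f)³ E[(f^{≤ d})⁴]`, so `f` has
little Fourier weight up to level `d`. On the other hand a total influence below `K E f / p` leaves
weight at least `(1 - K / (d + 1)) E f` there. With `d = ⌊2K⌋` the two bounds force some `f_{J→1}`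
to have measure `exp (-O(K))`.
-/

section Expectation

variable {p : ℝ}

lemma Ep_add (p : ℝ) (f g : (Fin n → Bool) → ℝ) :
    Ep p (fun x => f x + g x) = Ep p f + Ep p g := by
  simp only [Ep, mul_add, sum_add_distrib]

lemma Ep_sub (p : ℝ) (f g : (Fin n → Bool) → ℝ) :
    Ep p (fun x => f x - g x) = Ep p f - Ep p g := by
  simp only [Ep, mul_sub, sum_sub_distrib]

lemma Ep_const_mul (p c : ℝ) (f : (Fin n → Bool) → ℝ) :
    Ep p (fun x => c * f x) = c * Ep p f := by
  simp only [Ep, mul_sum, mul_left_comm]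

lemma Ep_sum {ι : Type*} (p : ℝ) (s : Finset ι) (f : ι → (Fin n → Bool) → ℝ) :
    Ep p (fun x => ∑ j ∈ s, f j x) = ∑ j ∈ s, Ep p (f j) := by
  simp only [Ep, mul_sum]
  exact sum_comm

lemma Ep_const (p c : ℝ) : Ep p (fun _ : Fin n → Bool => c) = c := by
  have total_mass := (prod_univ_sum (fun _ : Fin n => (univ : Finset Bool))
    fun _ b => if b then p else 1 - p).symm
  rw [Fintype.piFinset_univ] at total_mass
  rw [Ep, ← sum_mul, total_mass]
  simp

lemma prod_weight_nonneg (hp : 0 ≤ p) (hp1 : p ≤ 1) (x : Fin n → Bool) :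
    0 ≤ ∏ i, (if x i then p else 1 - p) :=
  prod_nonneg fun i _ => by split_ifs <;> linarith

lemma Ep_mono (hp : 0 ≤ p) (hp1 : p ≤ 1) {f g : (Fin n → Bool) → ℝ} (h : ∀ x, f x ≤ g x) :
    Ep p f ≤ Ep p g :=
  sum_le_sum fun x _ => mul_le_mul_of_nonneg_left (h x) (prod_weight_nonneg hp hp1 x)

lemma Ep_nonneg (hp : 0 ≤ p) (hp1 : p ≤ 1) {f : (Fin n → Bool) → ℝ} (h : ∀ x, 0 ≤ f x) :
    0 ≤ Ep p f :=
  sum_nonneg fun x _ => mul_nonneg (prod_weight_nonneg hp hp1 x) (h x)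

lemma sq_Ep_mul_le (hp : 0 ≤ p) (hp1 : p ≤ 1) (f g : (Fin n → Bool) → ℝ) :
    (Ep p fun x => f x * g x) ^ 2 ≤ (Ep p fun x => f x ^ 2) * Ep p fun x => g x ^ 2 :=
  sum_sq_le_sum_mul_sum_of_sq_le_mul _
    (fun x _ => mul_nonneg (prod_weight_nonneg hp hp1 x) (sq_nonneg _))
    (fun x _ => mul_nonneg (prod_weight_nonneg hp hp1 x) (sq_nonneg _))
    fun x _ => le_of_eq (by ring)

/-- Hölder's inequality with exponents `4/3` and `4`, for an indicator `f`. -/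
lemma Ep_mul_pow_four_le (hp : 0 ≤ p) (hp1 : p ≤ 1) {f : (Fin n → Bool) → ℝ}
    (hf : ∀ x, f x ^ 2 = f x) (g : (Fin n → Bool) → ℝ) :
    (Ep p fun x => f x * g x) ^ 4 ≤ Ep p f ^ 3 * Ep p fun x => g x ^ 4 := by
  have : 0 ≤ Ep p f := Ep_nonneg hp hp1 fun x => hf x ▸ sq_nonneg (f x)
  have first : (Ep p fun x => f x * g x) ^ 2 ≤ Ep p f * Ep p fun x => f x * g x ^ 2 := by
    have := sq_Ep_mul_le hp hp1 f fun x => f x * g x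
    simpa only [mul_pow, hf, ← mul_assoc, ← sq] using this
  have second : (Ep p fun x => f x * g x ^ 2) ^ 2 ≤ Ep p f * Ep p fun x => g x ^ 4 := by
    have := sq_Ep_mul_le hp hp1 f fun x => g x ^ 2
    simpa only [hf, ← pow_mul] using this
  calc (Ep p fun x => f x * g x) ^ 4
      = ((Ep p fun x => f x * g x) ^ 2) ^ 2 := by ring
    _ ≤ (Ep p f * Ep p fun x => f x * g x ^ 2) ^ 2 := by gcongr
    _ = Ep p f ^ 2 * (Ep p fun x => f x * g x ^ 2) ^ 2 := by ring
    _ ≤ Ep p f ^ 2 * (Ep p f * Ep p fun x => g x ^ 4) := by gcongr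
    _ = Ep p f ^ 3 * Ep p fun x => g x ^ 4 := by ring

end Expectation

section Restriction

/-- The restriction `f_{i→b}`, kept as a function on the whole cube that ignores coordinate `i`. -/
def restrictCoord (i : Fin n) (b : Bool) (f : (Fin n → Bool) → ℝ) : (Fin n → Bool) → ℝ :=
  fun x => f (Function.update x i b)

lemma Ep_eq_add_restrictCoord (p : ℝ) (i : Fin n) (f : (Fin n → Bool) → ℝ) :
    Ep p f = p * Ep p (restrictCoord i true f) + (1 - p) * Ep p (restrictCoord i false f) := by
  let glue : Bool × ({j // j ≠ i} → Bool) ≃ (Fin n → Bool) := (Equiv.funSplitAt i Bool).symm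
  have glue_self (b : Bool) (y) : glue (b, y) i = b := by
    simp [glue, Equiv.funSplitAt, Equiv.piSplitAt]
  have glue_ne (b : Bool) (y) (j : {j // j ≠ i}) : glue (b, y) j = y j := by
    simp [glue, Equiv.funSplitAt, Equiv.piSplitAt, j.2]
  have fubini (g : (Fin n → Bool) → ℝ) : Ep p g = ∑ y : {j // j ≠ i} → Bool,
      (∏ j, if y j then p else 1 - p) *
        (p * g (glue (true, y)) + (1 - p) * g (glue (false, y))) := by
    rw [Ep, ← glue.sum_comp, Fintype.sum_prod_type_right]
    refine sum_congr rfl fun y _ => ?_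
    have prod_glue (b : Bool) : (∏ j, if glue (b, y) j then p else 1 - p) =
        (if b then p else 1 - p) * ∏ j, if y j then p else 1 - p := by
      rw [Fintype.prod_eq_mul_prod_subtype_ne _ i]
      simp only [glue_self, glue_ne]
    rw [Fintype.sum_bool, prod_glue, prod_glue]
    simp only [if_true, Bool.false_eq_true, if_false]
    ring
  have restrict_glue (b b' : Bool) (y) : restrictCoord i b f (glue (b', y)) = f (glue (b, y)) := by
    refine congrArg f (funext fun j => ?_)
    by_cases hj : j = i
    · subst hj
      rw [Function.update_self, glue_self]
    · rw [Function.update_of_ne hj, glue_ne b' y ⟨j, hj⟩, glue_ne b y ⟨j, hj⟩]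
  rw [fubini f, fubini (restrictCoord i true f), fubini (restrictCoord i false f)]
  simp only [restrict_glue, mul_sum, ← sum_add_distrib]
  exact sum_congr rfl fun y _ => by ring

lemma restrict1_empty (f : (Fin n → Bool) → ℝ) : restrict1 ∅ f = f := by
  funext x
  simp only [restrict1, notMem_empty, if_false]

lemma restrict1_restrictCoord_true (U : Finset (Fin n)) (i : Fin n) (f : (Fin n → Bool) → ℝ) :
    restrict1 U (restrictCoord i true f) = restrict1 (insert i U) f := by
  refine funext fun x => congrArg f (funext fun j => ?_)
  by_cases hj : j = i <;> simp [hj]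

lemma restrict1_restrictCoord_of_notMem {U : Finset (Fin n)} {i : Fin n} (hi : i ∉ U) (b : Bool)
    (f : (Fin n → Bool) → ℝ) :
    restrict1 U (restrictCoord i b f) = restrictCoord i b (restrict1 U f) := by
  refine funext fun x => congrArg f (funext fun j => ?_)
  by_cases hj : j = i
  · subst hj; simp [hi]
  · simp [hj]

lemma Ep_restrictCoord_false_le {p : ℝ} (hp : 0 ≤ p) (hp1 : p < 1) (i : Fin n)
    {g : (Fin n → Bool) → ℝ} (hg : ∀ x, 0 ≤ g x) :
    Ep p (restrictCoord i false g) ≤ Ep p g / (1 - p) := by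
  have true_part : 0 ≤ p * Ep p (restrictCoord i true g) :=
    mul_nonneg hp (Ep_nonneg hp hp1.le fun x => hg _)
  rw [le_div_iff₀ (by linarith), Ep_eq_add_restrictCoord p i g]
  linarith

end Restriction

section CoordChar

/-- The normalised character `φ` of one `p`-biased bit, so that `χ_S x = ∏ i ∈ S, φ (x i)`. -/
noncomputable def coordChar (p : ℝ) (b : Bool) : ℝ :=
  ((if b then (1 : ℝ) else 0) - p) / √(p * (1 - p))

variable {p : ℝ}

lemma mul_coordChar_true (p : ℝ) : p * coordChar p true = √(p * (1 - p)) := by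
  rw [coordChar, if_pos rfl, ← mul_div_assoc, Real.div_sqrt]

lemma mul_coordChar_false (p : ℝ) : (1 - p) * coordChar p false = -√(p * (1 - p)) := by
  rw [coordChar, if_neg Bool.false_ne_true, ← mul_div_assoc, zero_sub, mul_neg, mul_comm, neg_div,
    Real.div_sqrt]

lemma coordChar_mul_coordChar (hp : 0 < p) (hp1 : p < 1) (b b' : Bool) :
    coordChar p b * coordChar p b' =
      ((if b then 1 else 0) - p) * ((if b' then 1 else 0) - p) / (p * (1 - p)) := by
  rw [coordChar, coordChar, div_mul_div_comm,
    Real.mul_self_sqrt (mul_nonneg hp.le (sub_nonneg.2 hp1.le))]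

lemma weight_mul_one_add_coordChar_mul (hp : 0 < p) (hp1 : p < 1) (b b' : Bool) :
    (if b then p else 1 - p) * (1 + coordChar p b * coordChar p b') = if b = b' then 1 else 0 := by
  have hp0 : p ≠ 0 := hp.ne'
  have hq0 : 1 - p ≠ 0 := (sub_pos.2 hp1).ne'
  rw [coordChar_mul_coordChar hp hp1]
  cases b <;> cases b' <;>
    simp only [if_true, if_false, Bool.false_eq_true, reduceCtorEq] <;> field_simp <;> ring

lemma coordChar_second_moment (hp : 0 < p) (hp1 : p < 1) :
    p * coordChar p true ^ 2 + (1 - p) * coordChar p false ^ 2 = 1 := by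
  have hp0 : p ≠ 0 := hp.ne'
  have hq0 : 1 - p ≠ 0 := (sub_pos.2 hp1).ne'
  simp only [sq, coordChar_mul_coordChar hp hp1, if_true, Bool.false_eq_true, if_false]
  field_simp
  ring

lemma coordChar_third_moment_sq_le (hp : 0 < p) (hp1 : p < 1) :
    (p * coordChar p true ^ 3 + (1 - p) * coordChar p false ^ 3) ^ 2 ≤ (p * (1 - p))⁻¹ := by
  have hp0 : p ≠ 0 := hp.ne'
  have hq : 0 < 1 - p := sub_pos.2 hp1
  have hs : √(p * (1 - p)) ^ 2 = p * (1 - p) := Real.sq_sqrt (by positivity)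
  have moment_eq : (p * coordChar p true ^ 3 + (1 - p) * coordChar p false ^ 3) ^ 2 =
      (1 - 2 * p) ^ 2 * (p * (1 - p))⁻¹ := by
    have cube (u : ℝ) : (u / √(p * (1 - p))) ^ 3 =
        u ^ 3 / (p * (1 - p)) * (√(p * (1 - p)))⁻¹ := by
      rw [div_pow, pow_succ √(p * (1 - p)), hs, ← div_div, div_eq_mul_inv _ √(p * (1 - p))]
    simp only [coordChar, cube, if_true, Bool.false_eq_true, if_false]
    rw [← mul_assoc, ← mul_assoc, ← add_mul, mul_pow, inv_pow, hs]
    congr 2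
    field_simp
    ring
  rw [moment_eq]
  exact mul_le_of_le_one_left (by positivity) (by nlinarith)

lemma coordChar_fourth_moment_le (hp : 0 < p) (hp1 : p < 1) :
    p * coordChar p true ^ 4 + (1 - p) * coordChar p false ^ 4 ≤ (p * (1 - p))⁻¹ := by
  have hp0 : p ≠ 0 := hp.ne'
  have hq0 : 1 - p ≠ 0 := (sub_pos.2 hp1).ne'
  have moment_eq : p * coordChar p true ^ 4 + (1 - p) * coordChar p false ^ 4 =
      (p * (1 - p))⁻¹ - 3 := by
    simp only [pow_succ _ 3, pow_succ _ 2, pow_two, mul_assoc, coordChar_mul_coordChar hp hp1]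
    simp only [if_true, Bool.false_eq_true, if_false]
    field_simp
    ring
  linarith

/-- The one-bit case of hypercontractivity, polarised. -/
lemma coordChar_two_function_inequality (hp : 0 < p) (hp1 : p < 1) (a b c d : ℝ) :
    p * ((a + 2⁻¹ * coordChar p true * b) ^ 2 * (c + 2⁻¹ * coordChar p true * d) ^ 2) +
      (1 - p) * ((a + 2⁻¹ * coordChar p false * b) ^ 2 * (c + 2⁻¹ * coordChar p false * d) ^ 2) ≤
    a ^ 2 * c ^ 2 + a ^ 2 * d ^ 2 + b ^ 2 * c ^ 2 + (p * (1 - p))⁻¹ * (b ^ 2 * d ^ 2) := by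
  have m₁ : p * coordChar p true + (1 - p) * coordChar p false = 0 := by
    rw [mul_coordChar_true, mul_coordChar_false, add_neg_cancel]
  have m₂ := coordChar_second_moment hp hp1
  have m₃ := coordChar_third_moment_sq_le hp hp1
  have m₄ := coordChar_fourth_moment_le hp hp1
  set u := coordChar p true
  set v := coordChar p false
  set M := p * u ^ 3 + (1 - p) * v ^ 3 with hM
  set r := (p * (1 - p))⁻¹
  have expand : p * ((a + 2⁻¹ * u * b) ^ 2 * (c + 2⁻¹ * u * d) ^ 2) +
      (1 - p) * ((a + 2⁻¹ * v * b) ^ 2 * (c + 2⁻¹ * v * d) ^ 2) =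
      a ^ 2 * c ^ 2 + (a ^ 2 * d ^ 2 / 4 + a * b * c * d + b ^ 2 * c ^ 2 / 4) +
        M * (a * b * d ^ 2 + c * d * b ^ 2) / 4 +
        (p * u ^ 4 + (1 - p) * v ^ 4) * (b ^ 2 * d ^ 2) / 16 := by
    rw [hM]
    linear_combination (a ^ 2 * c * d + a * b * c ^ 2) * m₁ +
      (a ^ 2 * d ^ 2 / 4 + a * b * c * d + b ^ 2 * c ^ 2 / 4) * m₂
  have cross₂ : a * b * c * d ≤ (a ^ 2 * d ^ 2 + b ^ 2 * c ^ 2) / 2 := by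
    nlinarith only [sq_nonneg (a * d - b * c)]
  have cross₃ : M * (a * b * d ^ 2 + c * d * b ^ 2) ≤
      (a ^ 2 * d ^ 2 + b ^ 2 * c ^ 2) / 2 + M ^ 2 * (b ^ 2 * d ^ 2) := by
    nlinarith only [sq_nonneg (a * d - M * (b * d)), sq_nonneg (b * c - M * (b * d))]
  have hbd : 0 ≤ b ^ 2 * d ^ 2 := by positivity
  have third := mul_le_mul_of_nonneg_right m₃ hbd
  have fourth := mul_le_mul_of_nonneg_right m₄ hbd
  have : 0 ≤ M ^ 2 * (b ^ 2 * d ^ 2) := by positivity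
  have : 0 ≤ a ^ 2 * d ^ 2 := by positivity
  have : 0 ≤ b ^ 2 * c ^ 2 := by positivity
  rw [expand]
  linarith

end CoordChar

section Fourier

variable {p : ℝ}

lemma chi_eq_prod_coordChar (p : ℝ) (T : Finset (Fin n)) (x : Fin n → Bool) :
    chi p T x = ∏ i ∈ T, coordChar p (x i) := rfl

lemma chi_insert (p : ℝ) {T : Finset (Fin n)} {i : Fin n} (hi : i ∉ T) (x : Fin n → Bool) :
    chi p (insert i T) x = coordChar p (x i) * chi p T x :=
  prod_insert hi

lemma chi_update (p : ℝ) {T : Finset (Fin n)} {i : Fin n} (hi : i ∉ T) (x : Fin n → Bool)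
    (b : Bool) : chi p T (Function.update x i b) = chi p T x :=
  prod_congr rfl fun j hj => by rw [Function.update_of_ne (ne_of_mem_of_not_mem hj hi)]

lemma prod_weight_mul_sum_chi_mul_chi (hp : 0 < p) (hp1 : p < 1) (x y : Fin n → Bool) :
    (∏ i, if y i then p else 1 - p) * ∑ T, chi p T y * chi p T x = if y = x then 1 else 0 := by
  have product_form : ∑ T, chi p T y * chi p T x =
      ∏ i, (1 + coordChar p (y i) * coordChar p (x i)) := by
    simp only [prod_one_add, powerset_univ, prod_mul_distrib, chi_eq_prod_coordChar]
  rw [product_form, ← prod_mul_distrib]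
  simp only [weight_mul_one_add_coordChar_mul hp hp1, Fintype.prod_ite_zero, prod_const_one,
    funext_iff]

lemma sum_coeff_mul_chi (hp : 0 < p) (hp1 : p < 1) (f : (Fin n → Bool) → ℝ) (x : Fin n → Bool) :
    ∑ T, coeff p f T * chi p T x = f x := by
  calc ∑ T, coeff p f T * chi p T x
      = ∑ y, f y * ((∏ i, if y i then p else 1 - p) * ∑ T, chi p T y * chi p T x) := by
        simp only [coeff, Ep, sum_mul, mul_sum]
        rw [sum_comm]
        exact sum_congr rfl fun y _ => sum_congr rfl fun T _ => by ring
    _ = f x := by simp [prod_weight_mul_sum_chi_mul_chi hp hp1]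

lemma Ep_mul_sum_chi (p : ℝ) (f : (Fin n → Bool) → ℝ) (s : Finset (Finset (Fin n)))
    (c : Finset (Fin n) → ℝ) :
    Ep p (fun x => f x * ∑ T ∈ s, c T * chi p T x) = ∑ T ∈ s, c T * coeff p f T := by
  simp only [mul_sum, mul_left_comm (f _), Ep_sum, Ep_const_mul, coeff]

lemma sum_coeff_sq (hp : 0 < p) (hp1 : p < 1) (f : (Fin n → Bool) → ℝ) :
    ∑ T, coeff p f T ^ 2 = Ep p fun x => f x ^ 2 := by
  have := Ep_mul_sum_chi p f univ (coeff p f)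
  simpa only [sum_coeff_mul_chi hp hp1, ← sq] using this.symm

end Fourier

section UpperWeight

variable {ι : Type*} [DecidableEq ι] {A S : Finset ι} {i : ι}

/-- The square weight `∑_{S ⊆ T ⊆ A} c(T)²` of a family of coefficients above `S`; for the
Fourier coefficients of `f` and full `A` it is `σ^{2|S|} I_S(f)`. -/
def upperWeight (A S : Finset ι) (c : Finset ι → ℝ) : ℝ :=
  ∑ T ∈ A.powerset with S ⊆ T, c T ^ 2

lemma upperWeight_nonneg (A S : Finset ι) (c : Finset ι → ℝ) : 0 ≤ upperWeight A S c :=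
  sum_nonneg fun _ _ => sq_nonneg _

lemma upperWeight_insert (hiA : i ∉ A) (hiS : i ∉ S) (c : Finset ι → ℝ) :
    upperWeight (insert i A) S c = upperWeight A S c + upperWeight A S fun T => c (insert i T) := by
  simp only [upperWeight, sum_filter, sum_powerset_insert hiA, subset_insert_iff_of_notMem hiS]

lemma upperWeight_insert_insert (hiA : i ∉ A) (hiS : i ∉ S) (c : Finset ι → ℝ) :
    upperWeight (insert i A) (insert i S) c = upperWeight A S fun T => c (insert i T) := by
  simp only [upperWeight, sum_filter, sum_powerset_insert hiA, insert_subset_insert_iff hiS]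
  refine (add_eq_right.2 (sum_eq_zero fun T hT => if_neg fun hST => hiA ?_))
  exact mem_powerset.1 hT (hST (mem_insert_self i S))

lemma sum_upperWeight (A : Finset ι) (c : Finset ι → ℝ) :
    ∑ S ∈ A.powerset, upperWeight A S c = ∑ T ∈ A.powerset, 2 ^ #T * c T ^ 2 := by
  have swap : ∑ S ∈ A.powerset, upperWeight A S c =
      ∑ T ∈ A.powerset, ∑ _S ∈ T.powerset, c T ^ 2 := by
    refine sum_comm' fun S T => ?_
    simp only [mem_filter, mem_powerset]
    exact ⟨fun h => ⟨h.2.2, h.2.1⟩, fun h => ⟨h.1.trans h.2, h.2, h.1⟩⟩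
  rw [swap]
  simp only [sum_const, card_powerset, nsmul_eq_mul, Nat.cast_pow, Nat.cast_ofNat]

end UpperWeight

section GeneralisedInfluence

variable {p : ℝ}

lemma genInf_eq_upperWeight_div (p : ℝ) (S : Finset (Fin n)) (f : (Fin n → Bool) → ℝ) :
    genInf p S f = upperWeight univ S (coeff p f) / (p * (1 - p)) ^ #S := by
  rw [genInf, upperWeight, powerset_univ]

lemma genInf_empty (hp : 0 < p) (hp1 : p < 1) (f : (Fin n → Bool) → ℝ) :
    genInf p ∅ f = Ep p fun x => f x ^ 2 := by
  simp only [genInf, empty_subset, filter_true, card_empty, pow_zero, div_one,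
    sum_coeff_sq hp hp1]

/-- The discrete derivative `f_{i→1} - f_{i→0}`; in the Fourier normalisation,
`D_{i} f = σ · discreteDeriv i f`. -/
def discreteDeriv (i : Fin n) (f : (Fin n → Bool) → ℝ) : (Fin n → Bool) → ℝ :=
  fun x => restrictCoord i true f x - restrictCoord i false f x

lemma coeff_insert (p : ℝ) {i : Fin n} {T : Finset (Fin n)} (hi : i ∉ T)
    (f : (Fin n → Bool) → ℝ) :
    coeff p f (insert i T) = √(p * (1 - p)) * coeff p (discreteDeriv i f) T := by
  rw [coeff, coeff, Ep_eq_add_restrictCoord p i, ← Ep_const_mul, ← Ep_const_mul, ← Ep_const_mul,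
    ← Ep_add]
  refine congrArg (Ep p) (funext fun x => ?_)
  simp only [discreteDeriv, restrictCoord, chi_insert p hi, chi_update p hi, Function.update_self]
  linear_combination f (Function.update x i true) * chi p T x * mul_coordChar_true p +
    f (Function.update x i false) * chi p T x * mul_coordChar_false p

lemma coeff_discreteDeriv_insert (p : ℝ) {i : Fin n} {T : Finset (Fin n)} (hi : i ∉ T)
    (f : (Fin n → Bool) → ℝ) : coeff p (discreteDeriv i f) (insert i T) = 0 := by
  have second_deriv_zero : discreteDeriv i (discreteDeriv i f) = fun _ => 0 := by
    funext x
    simp only [discreteDeriv, restrictCoord, Function.update_idem, sub_self]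
  rw [coeff_insert p hi, second_deriv_zero, coeff]
  simp only [zero_mul, Ep_const, mul_zero]

lemma coeff_discreteDeriv (p : ℝ) (i : Fin n) (f : (Fin n → Bool) → ℝ) (T : Finset (Fin n)) :
    coeff p (discreteDeriv i f) T =
      coeff p (restrictCoord i true f) T - coeff p (restrictCoord i false f) T := by
  simp only [coeff, discreteDeriv, sub_mul, Ep_sub]

lemma genInf_insert (hp : 0 < p) (hp1 : p < 1) {i : Fin n} {S : Finset (Fin n)} (hi : i ∉ S)
    (f : (Fin n → Bool) → ℝ) : genInf p (insert i S) f = genInf p S (discreteDeriv i f) := by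
  have hpq : 0 < p * (1 - p) := mul_pos hp (sub_pos.2 hp1)
  have notMem_of_mem {T : Finset (Fin n)} (hT : T ∈ (univ.erase i).powerset) : i ∉ T :=
    fun h => notMem_erase i univ (mem_powerset.1 hT h)
  have above_i : upperWeight univ (insert i S) (coeff p f) =
      p * (1 - p) * upperWeight (univ.erase i) S (coeff p (discreteDeriv i f)) := by
    rw [← insert_erase (mem_univ i), upperWeight_insert_insert (notMem_erase i univ) hi,
      insert_erase (mem_univ i), upperWeight, upperWeight, mul_sum]
    refine sum_congr rfl fun T hT => ?_
    simp only [coeff_insert p (notMem_of_mem (mem_filter.1 hT).1), mul_pow, Real.sq_sqrt hpq.le]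
  have avoiding_i : upperWeight univ S (coeff p (discreteDeriv i f)) =
      upperWeight (univ.erase i) S (coeff p (discreteDeriv i f)) := by
    rw [← insert_erase (mem_univ i), upperWeight_insert (notMem_erase i univ) hi,
      insert_erase (mem_univ i), add_eq_left]
    refine sum_eq_zero fun T hT => ?_
    simp only [coeff_discreteDeriv_insert p (notMem_of_mem (mem_filter.1 hT).1), sq, zero_mul]
  rw [genInf_eq_upperWeight_div, genInf_eq_upperWeight_div, above_i, avoiding_i,
    card_insert_of_notMem hi, pow_succ', mul_div_mul_left _ _ hpq.ne']

lemma genInf_discreteDeriv_le (hp : 0 ≤ p) (hp1 : p ≤ 1) (i : Fin n) (S : Finset (Fin n))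
    (f : (Fin n → Bool) → ℝ) :
    genInf p S (discreteDeriv i f) ≤
      2 * genInf p S (restrictCoord i true f) + 2 * genInf p S (restrictCoord i false f) := by
  have : 0 ≤ p * (1 - p) := mul_nonneg hp (sub_nonneg.2 hp1)
  simp only [genInf, ← mul_div_assoc, ← add_div, mul_sum, ← sum_add_distrib, coeff_discreteDeriv]
  gcongr with T
  linarith [sq_nonneg (coeff p (restrictCoord i true f) T + coeff p (restrictCoord i false f) T)]

lemma genInf_le_of_restrict1_le (hp : 0 < p) (hp1 : p < 1) (S : Finset (Fin n))
    (f : (Fin n → Bool) → ℝ) (ε : ℝ) (hε : ∀ U ⊆ S, Ep p (fun x => restrict1 U f x ^ 2) ≤ ε) :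
    genInf p S f ≤ (2 + 2 / (1 - p)) ^ #S * ε := by
  induction S using Finset.induction_on generalizing f ε with
  | empty =>
    rw [card_empty, pow_zero, one_mul, genInf_empty hp hp1]
    simpa only [restrict1_empty] using hε ∅ subset_rfl
  | insert i S hi ih =>
    have true_part := ih (restrictCoord i true f) ε fun U hU => by
      simpa only [restrict1_restrictCoord_true] using hε _ (insert_subset_insert i hU)
    have false_part := ih (restrictCoord i false f) (ε / (1 - p)) fun U hU => by
      rw [restrict1_restrictCoord_of_notMem fun h => hi (hU h)]
      calc Ep p (restrictCoord i false fun x => restrict1 U f x ^ 2)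
          ≤ Ep p (fun x => restrict1 U f x ^ 2) / (1 - p) :=
            Ep_restrictCoord_false_le hp.le hp1 i fun x => sq_nonneg _
        _ ≤ ε / (1 - p) :=
            div_le_div_of_nonneg_right (hε U (hU.trans (subset_insert i S))) (sub_nonneg.2 hp1.le)
    rw [genInf_insert hp hp1 hi, card_insert_of_notMem hi]
    calc genInf p S (discreteDeriv i f)
        ≤ 2 * genInf p S (restrictCoord i true f) + 2 * genInf p S (restrictCoord i false f) :=
          genInf_discreteDeriv_le hp.le hp1.le i S f
      _ ≤ 2 * ((2 + 2 / (1 - p)) ^ #S * ε) +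
          2 * ((2 + 2 / (1 - p)) ^ #S * (ε / (1 - p))) := by gcongr
      _ = (2 + 2 / (1 - p)) ^ (#S + 1) * ε := by ring

end GeneralisedInfluence

section TotalInfluence

variable {p : ℝ}

lemma totalInf_nonneg (hp : 0 ≤ p) (hp1 : p ≤ 1) (f : (Fin n → Bool) → ℝ) : 0 ≤ totalInf p f :=
  sum_nonneg fun i _ => Ep_nonneg hp hp1 fun x => by split_ifs <;> norm_num

lemma totalInf_eq_sum_genInf (hp : 0 < p) (hp1 : p < 1) {f : (Fin n → Bool) → ℝ}
    (hf : ∀ x, f x = 0 ∨ f x = 1) : totalInf p f = ∑ i, genInf p {i} f := by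
  have indicator_eq (i : Fin n) (x : Fin n → Bool) :
      (if f (Function.update x i (!x i)) = f x then (0 : ℝ) else 1) = discreteDeriv i f x ^ 2 := by
    rw [← congrArg f (Function.update_eq_self i x), discreteDeriv, restrictCoord, restrictCoord]
    rcases hf (Function.update x i true) with h₁ | h₁ <;>
      rcases hf (Function.update x i false) with h₀ | h₀ <;>
      cases h : x i <;> simp [h₁, h₀]
  refine sum_congr rfl fun i _ => ?_
  simp only [indicator_eq, ← insert_empty_eq i, genInf_insert hp hp1 (notMem_empty i),
    genInf_empty hp hp1]

lemma sum_genInf_singleton (hp : 0 < p) (hp1 : p < 1) (f : (Fin n → Bool) → ℝ) :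
    p * (1 - p) * ∑ i, genInf p {i} f = ∑ T : Finset (Fin n), (#T : ℝ) * coeff p f T ^ 2 := by
  have hpq : p * (1 - p) ≠ 0 := (mul_pos hp (sub_pos.2 hp1)).ne'
  simp only [genInf, card_singleton, pow_one, ← sum_div, mul_div_cancel₀ _ hpq,
    singleton_subset_iff, sum_filter]
  rw [sum_comm]
  simp

/-- The Fourier weight `W^{≤ d}[f] = ∑_{|T| ≤ d} f̂(T)²` up to level `d`. -/
noncomputable def lowWeight (p : ℝ) (d : ℕ) (f : (Fin n → Bool) → ℝ) : ℝ :=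
  ∑ T : Finset (Fin n) with #T ≤ d, coeff p f T ^ 2

lemma lowWeight_nonneg (p : ℝ) (d : ℕ) (f : (Fin n → Bool) → ℝ) : 0 ≤ lowWeight p d f :=
  sum_nonneg fun _ _ => sq_nonneg _

lemma Ep_mul_trunc (p : ℝ) (d : ℕ) (f : (Fin n → Bool) → ℝ) :
    Ep p (fun x => f x * trunc p d f x) = lowWeight p d f := by
  simp only [trunc, Ep_mul_sum_chi, lowWeight, ← sq]

lemma succ_mul_sub_lowWeight_le (hp : 0 < p) (hp1 : p < 1) (d : ℕ) (f : (Fin n → Bool) → ℝ) :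
    (d + 1) * ((Ep p fun x => f x ^ 2) - lowWeight p d f) ≤
      ∑ T : Finset (Fin n), (#T : ℝ) * coeff p f T ^ 2 := by
  have high_weight : (Ep p fun x => f x ^ 2) - lowWeight p d f =
      ∑ T : Finset (Fin n) with ¬ #T ≤ d, coeff p f T ^ 2 := by
    rw [← sum_coeff_sq hp hp1, ← sum_filter_add_sum_filter_not univ (#· ≤ d), lowWeight,
      add_sub_cancel_left]
  calc (d + 1) * ((Ep p fun x => f x ^ 2) - lowWeight p d f)
      ≤ ∑ T : Finset (Fin n) with ¬ #T ≤ d, (#T : ℝ) * coeff p f T ^ 2 := by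
        rw [high_weight, mul_sum]
        gcongr with T hT
        exact_mod_cast not_le.1 (mem_filter.1 hT).2
    _ ≤ ∑ T : Finset (Fin n), (#T : ℝ) * coeff p f T ^ 2 :=
        sum_le_univ_sum_of_nonneg fun T => by positivity

lemma succ_mul_sub_lowWeight_le_mul_totalInf (hp : 0 < p) (hp1 : p < 1) (d : ℕ)
    {f : (Fin n → Bool) → ℝ} (hf : ∀ x, f x = 0 ∨ f x = 1) :
    (d + 1) * (Ep p f - lowWeight p d f) ≤ p * totalInf p f := by
  have hf_sq (x : Fin n → Bool) : f x ^ 2 = f x := by rcases hf x with h | h <;> simp [h]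
  have tail := succ_mul_sub_lowWeight_le hp hp1 d f
  rw [← sum_genInf_singleton hp hp1, ← totalInf_eq_sum_genInf hp hp1 hf, funext hf_sq] at tail
  have hI := mul_nonneg hp.le (totalInf_nonneg hp.le hp1.le f)
  nlinarith

end TotalInfluence

section Hypercontractivity

variable {p : ℝ}

/-- The noise operator `T_ρ` applied to the polynomial `∑_{T ⊆ A} c(T) χ_T`. -/
noncomputable def noisePoly (p ρ : ℝ) (A : Finset (Fin n)) (c : Finset (Fin n) → ℝ) :
    (Fin n → Bool) → ℝ :=
  fun x => ∑ T ∈ A.powerset, ρ ^ #T * c T * chi p T x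

lemma noisePoly_update (p ρ : ℝ) {A : Finset (Fin n)} {i : Fin n} (hi : i ∉ A)
    (c : Finset (Fin n) → ℝ) (x : Fin n → Bool) (b : Bool) :
    noisePoly p ρ A c (Function.update x i b) = noisePoly p ρ A c x :=
  sum_congr rfl fun T hT => by rw [chi_update p fun h => hi (mem_powerset.1 hT h)]

lemma noisePoly_insert (p ρ : ℝ) {A : Finset (Fin n)} {i : Fin n} (hi : i ∉ A)
    (c : Finset (Fin n) → ℝ) (x : Fin n → Bool) :
    noisePoly p ρ (insert i A) c x = noisePoly p ρ A c x +
      ρ * coordChar p (x i) * noisePoly p ρ A (fun T => c (insert i T)) x := by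
  rw [noisePoly, sum_powerset_insert hi, noisePoly, noisePoly, mul_sum]
  congr 1
  refine sum_congr rfl fun T hT => ?_
  have hiT : i ∉ T := fun h => hi (mem_powerset.1 hT h)
  rw [chi_insert p hiT, card_insert_of_notMem hiT]
  ring

lemma Ep_noisePoly_insert_sq_mul_sq_le (hp : 0 < p) (hp1 : p < 1) {A : Finset (Fin n)} {i : Fin n}
    (hi : i ∉ A) (c e : Finset (Fin n) → ℝ) :
    Ep p (fun x => noisePoly p 2⁻¹ (insert i A) c x ^ 2 * noisePoly p 2⁻¹ (insert i A) e x ^ 2) ≤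
      Ep p (fun x => noisePoly p 2⁻¹ A c x ^ 2 * noisePoly p 2⁻¹ A e x ^ 2) +
      Ep p (fun x => noisePoly p 2⁻¹ A c x ^ 2 *
        noisePoly p 2⁻¹ A (fun T => e (insert i T)) x ^ 2) +
      Ep p (fun x => noisePoly p 2⁻¹ A (fun T => c (insert i T)) x ^ 2 *
        noisePoly p 2⁻¹ A e x ^ 2) +
      (p * (1 - p))⁻¹ * Ep p (fun x => noisePoly p 2⁻¹ A (fun T => c (insert i T)) x ^ 2 *
        noisePoly p 2⁻¹ A (fun T => e (insert i T)) x ^ 2) := by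
  rw [Ep_eq_add_restrictCoord p i]
  simp only [← Ep_const_mul, ← Ep_add]
  refine Ep_mono hp.le hp1.le fun x => ?_
  simp only [restrictCoord, noisePoly_insert p _ hi, noisePoly_update p _ hi, Function.update_self]
  exact coordChar_two_function_inequality hp hp1 _ _ _ _

/-- Hypercontractivity, polarised to two functions so that the induction on `A` goes through: the
coefficients of a polynomial and of its derivatives differ after one step. -/
lemma Ep_noisePoly_sq_mul_sq_le (hp : 0 < p) (hp1 : p < 1) (A : Finset (Fin n))
    (c e : Finset (Fin n) → ℝ) :
    Ep p (fun x => noisePoly p 2⁻¹ A c x ^ 2 * noisePoly p 2⁻¹ A e x ^ 2) ≤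
      ∑ S ∈ A.powerset, (p * (1 - p))⁻¹ ^ #S * (upperWeight A S c * upperWeight A S e) := by
  have hr : 0 ≤ (p * (1 - p))⁻¹ := inv_nonneg.2 (mul_nonneg hp.le (sub_nonneg.2 hp1.le))
  induction A using Finset.induction_on generalizing c e with
  | empty => simp [noisePoly, chi, upperWeight, Ep_const]
  | insert i A hi ih =>
    refine (Ep_noisePoly_insert_sq_mul_sq_le hp hp1 hi c e).trans ?_
    set c' : Finset (Fin n) → ℝ := fun T => c (insert i T) with hc'
    set e' : Finset (Fin n) → ℝ := fun T => e (insert i T) with he'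
    set r := (p * (1 - p))⁻¹
    set B : (Finset (Fin n) → ℝ) → (Finset (Fin n) → ℝ) → ℝ := fun c e =>
      ∑ S ∈ A.powerset, r ^ #S * (upperWeight A S c * upperWeight A S e) with hB
    have B_nonneg : 0 ≤ B c' e' := sum_nonneg fun S _ => mul_nonneg (pow_nonneg hr _)
      (mul_nonneg (upperWeight_nonneg _ _ _) (upperWeight_nonneg _ _ _))
    have bound_insert : ∑ S ∈ (insert i A).powerset,
        r ^ #S * (upperWeight (insert i A) S c * upperWeight (insert i A) S e) =
        B c e + B c e' + B c' e + B c' e' + r * B c' e' := by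
      simp only [hB, sum_powerset_insert hi, mul_sum, ← sum_add_distrib]
      refine sum_congr rfl fun S hS => ?_
      have hiS : i ∉ S := fun h => hi (mem_powerset.1 hS h)
      rw [upperWeight_insert hi hiS, upperWeight_insert hi hiS, upperWeight_insert_insert hi hiS,
        upperWeight_insert_insert hi hiS, card_insert_of_notMem hiS, ← hc', ← he']
      ring
    rw [bound_insert]
    linarith [ih c e, ih c e', ih c' e, mul_le_mul_of_nonneg_left (ih c' e') hr]

end Hypercontractivity

section LevelInequality

variable {p : ℝ}

/-- The coefficients of `T_2 (f^{≤ d})`, from which `T_{1/2}` recovers `f^{≤ d}`. -/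
noncomputable def amplifiedCoeff (p : ℝ) (d : ℕ) (f : (Fin n → Bool) → ℝ)
    (T : Finset (Fin n)) : ℝ :=
  if #T ≤ d then 2 ^ #T * coeff p f T else 0

lemma noisePoly_amplifiedCoeff (p : ℝ) (d : ℕ) (f : (Fin n → Bool) → ℝ) :
    noisePoly p 2⁻¹ univ (amplifiedCoeff p d f) = trunc p d f := by
  funext x
  rw [noisePoly, trunc, powerset_univ, sum_filter]
  refine sum_congr rfl fun T _ => ?_
  rw [amplifiedCoeff]
  split_ifs
  · rw [← mul_assoc, ← mul_pow, inv_mul_cancel₀ two_ne_zero, one_pow, one_mul]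
  · rw [mul_zero, zero_mul]

lemma amplifiedCoeff_sq_le (p : ℝ) (d : ℕ) (f : (Fin n → Bool) → ℝ) (T : Finset (Fin n)) :
    amplifiedCoeff p d f T ^ 2 ≤ 4 ^ d * coeff p f T ^ 2 := by
  rw [amplifiedCoeff]
  split_ifs with hT
  · calc (2 ^ #T * coeff p f T) ^ 2
        = 4 ^ #T * coeff p f T ^ 2 := by
          rw [mul_pow, ← pow_mul, mul_comm #T, pow_mul]; norm_num
      _ ≤ 4 ^ d * coeff p f T ^ 2 := by
          gcongr
          norm_num
  · rw [sq, zero_mul]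
    positivity

lemma upperWeight_amplifiedCoeff_le (p : ℝ) (d : ℕ) (f : (Fin n → Bool) → ℝ)
    (S : Finset (Fin n)) :
    upperWeight univ S (amplifiedCoeff p d f) ≤ 4 ^ d * upperWeight univ S (coeff p f) := by
  rw [upperWeight, upperWeight, mul_sum]
  exact sum_le_sum fun T _ => amplifiedCoeff_sq_le p d f T

lemma upperWeight_amplifiedCoeff_of_lt (p : ℝ) {d : ℕ} (f : (Fin n → Bool) → ℝ)
    {S : Finset (Fin n)} (hS : d < #S) : upperWeight univ S (amplifiedCoeff p d f) = 0 := by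
  refine sum_eq_zero fun T hT => ?_
  have hT : d < #T := hS.trans_le (card_le_card (mem_filter.1 hT).2)
  rw [amplifiedCoeff, if_neg hT.not_ge, sq, zero_mul]

lemma sum_upperWeight_amplifiedCoeff_le (p : ℝ) (d : ℕ) (f : (Fin n → Bool) → ℝ) :
    ∑ S : Finset (Fin n), upperWeight univ S (amplifiedCoeff p d f) ≤ 8 ^ d * lowWeight p d f := by
  have swap := sum_upperWeight univ (amplifiedCoeff p d f)
  rw [powerset_univ] at swap
  rw [swap, lowWeight, mul_sum, sum_filter]
  refine sum_le_sum fun T _ => ?_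
  split_ifs with hT
  · calc 2 ^ #T * amplifiedCoeff p d f T ^ 2
        ≤ 2 ^ d * (4 ^ d * coeff p f T ^ 2) := by
          gcongr
          · norm_num
          · exact amplifiedCoeff_sq_le p d f T
      _ = 8 ^ d * coeff p f T ^ 2 := by rw [← mul_assoc, ← mul_pow]; norm_num
  · rw [amplifiedCoeff, if_neg hT, sq, zero_mul, mul_zero]

lemma Ep_trunc_pow_four_le (hp : 0 < p) (hp1 : p < 1) {d : ℕ} {f : (Fin n → Bool) → ℝ} {B : ℝ}
    (hB : ∀ S : Finset (Fin n), #S ≤ d → genInf p S f ≤ B) :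
    Ep p (fun x => trunc p d f x ^ 4) ≤ 32 ^ d * B * lowWeight p d f := by
  have : 0 < p * (1 - p) := mul_pos hp (sub_pos.2 hp1)
  have hB0 : 0 ≤ B := by
    refine le_trans ?_ (hB ∅ (Nat.zero_le d))
    rw [genInf_empty hp hp1]
    exact Ep_nonneg hp.le hp1.le fun x => sq_nonneg _
  have term_le (S : Finset (Fin n)) : (p * (1 - p))⁻¹ ^ #S *
      (upperWeight univ S (amplifiedCoeff p d f) * upperWeight univ S (amplifiedCoeff p d f)) ≤
      4 ^ d * B * upperWeight univ S (amplifiedCoeff p d f) := by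
    rcases le_or_gt #S d with hS | hS
    · rw [← mul_assoc]
      refine mul_le_mul_of_nonneg_right ?_ (upperWeight_nonneg _ _ _)
      calc (p * (1 - p))⁻¹ ^ #S * upperWeight univ S (amplifiedCoeff p d f)
          ≤ (p * (1 - p))⁻¹ ^ #S * (4 ^ d * upperWeight univ S (coeff p f)) := by
            gcongr
            exact upperWeight_amplifiedCoeff_le p d f S
        _ = 4 ^ d * genInf p S f := by
            rw [genInf_eq_upperWeight_div, inv_pow]; ring
        _ ≤ 4 ^ d * B := by gcongr; exact hB S hS
    · simp only [upperWeight_amplifiedCoeff_of_lt p f hS, mul_zero, le_refl]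
  calc Ep p (fun x => trunc p d f x ^ 4)
      = Ep p (fun x => noisePoly p 2⁻¹ univ (amplifiedCoeff p d f) x ^ 2 *
          noisePoly p 2⁻¹ univ (amplifiedCoeff p d f) x ^ 2) := by
        simp only [noisePoly_amplifiedCoeff, ← pow_add]
    _ ≤ ∑ S : Finset (Fin n), 4 ^ d * B * upperWeight univ S (amplifiedCoeff p d f) := by
        refine (Ep_noisePoly_sq_mul_sq_le hp hp1 univ _ _).trans ?_
        rw [powerset_univ]
        exact sum_le_sum fun S _ => term_le S
    _ ≤ 4 ^ d * B * (8 ^ d * lowWeight p d f) := by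
        rw [← mul_sum]
        gcongr
        exact sum_upperWeight_amplifiedCoeff_le p d f
    _ = 32 ^ d * B * lowWeight p d f := by
        rw [show (32 : ℝ) = 4 * 8 by norm_num, mul_pow]; ring

lemma lowWeight_pow_three_le (hp : 0 < p) (hp1 : p < 1) {d : ℕ} {f : (Fin n → Bool) → ℝ} {ε : ℝ}
    (hf : ∀ x, f x ^ 2 = f x) (hε : ∀ U : Finset (Fin n), #U ≤ d → Ep p (restrict1 U f) ≤ ε) :
    lowWeight p d f ^ 3 ≤ (32 * (2 + 2 / (1 - p))) ^ d * ε * Ep p f ^ 3 := by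
  have hq : 0 < 1 - p := sub_pos.2 hp1
  have hμ : 0 ≤ Ep p f := Ep_nonneg hp.le hp1.le fun x => hf x ▸ sq_nonneg (f x)
  have hε0 : 0 ≤ ε := hμ.trans (by simpa only [restrict1_empty] using hε ∅ (Nat.zero_le d))
  rcases (lowWeight_nonneg p d f).eq_or_lt with hW | hW
  · rw [← hW, zero_pow three_ne_zero]
    positivity
  have genInf_le (S : Finset (Fin n)) (hS : #S ≤ d) :
      genInf p S f ≤ (2 + 2 / (1 - p)) ^ d * ε := by
    have hκ : 1 ≤ 2 + 2 / (1 - p) := by linarith [div_nonneg zero_le_two hq.le]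
    refine (genInf_le_of_restrict1_le hp hp1 S f ε fun U hU => ?_).trans (by gcongr)
    exact (congrArg (Ep p) (funext fun x => hf _)).trans_le (hε U ((card_le_card hU).trans hS))
  refine le_of_mul_le_mul_right ?_ hW
  calc lowWeight p d f ^ 3 * lowWeight p d f
      = Ep p (fun x => f x * trunc p d f x) ^ 4 := by rw [Ep_mul_trunc, ← pow_succ]
    _ ≤ Ep p f ^ 3 * Ep p (fun x => trunc p d f x ^ 4) := Ep_mul_pow_four_le hp.le hp1.le hf _
    _ ≤ Ep p f ^ 3 * (32 ^ d * ((2 + 2 / (1 - p)) ^ d * ε) * lowWeight p d f) := by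
        gcongr
        exact Ep_trunc_pow_four_le hp hp1 genInf_le
    _ = (32 * (2 + 2 / (1 - p))) ^ d * ε * Ep p f ^ 3 * lowWeight p d f := by
        rw [mul_pow]; ring

lemma exists_lowWeight_pow_three_le_restrict1 (hp : 0 < p) (hp1 : p < 1) (d : ℕ)
    {f : (Fin n → Bool) → ℝ} (hf : ∀ x, f x ^ 2 = f x) :
    ∃ J : Finset (Fin n), #J ≤ d ∧
      lowWeight p d f ^ 3 ≤ (32 * (2 + 2 / (1 - p))) ^ d * Ep p (restrict1 J f) * Ep p f ^ 3 := by
  obtain ⟨J, hJ, J_max⟩ := exists_max_image (univ.filter fun J : Finset (Fin n) => #J ≤ d)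
    (fun J => Ep p (restrict1 J f)) ⟨∅, by simp⟩
  refine ⟨J, (mem_filter.1 hJ).2, lowWeight_pow_three_le hp hp1 hf fun U hU => ?_⟩
  exact J_max U (mem_filter.2 ⟨mem_univ U, hU⟩)

end LevelInequality

lemma exp_neg_two_mul_le_one_sub {t : ℝ} (ht : 0 ≤ t) (ht2 : t ≤ 1 / 2) :
    Real.exp (-(2 * t)) ≤ 1 - t := by
  rw [Real.exp_neg]
  refine inv_le_of_inv_le₀ (by linarith) ?_
  calc (1 - t)⁻¹ ≤ 2 * t + 1 := by
        rw [inv_le_iff_one_le_mul₀ (by linarith)]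
        nlinarith
    _ ≤ Real.exp (2 * t) := Real.add_one_le_exp _

lemma exp_neg_six_mul_le_one_sub_div_pow_three {K : ℝ} {d : ℕ} (hK : 0 ≤ K)
    (hKd : 2 * K ≤ d + 1) : Real.exp (-(6 * K)) ≤ (1 - K / (d + 1)) ^ 3 := by
  have le_K : K / (d + 1) ≤ K := div_le_self hK (by linarith [d.cast_nonneg (α := ℝ)])
  have le_half : K / (d + 1) ≤ 1 / 2 := by rw [div_le_iff₀ (by positivity)]; linarith
  calc Real.exp (-(6 * K))
      ≤ Real.exp (-(2 * (K / (d + 1)))) ^ 3 := by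
        rw [← Real.exp_nat_mul, Real.exp_le_exp, Nat.cast_ofNat]
        linarith
    _ ≤ (1 - K / (d + 1)) ^ 3 := by
        gcongr
        exact exp_neg_two_mul_le_one_sub (by positivity) le_half

lemma log_hypercontractive_factor_le {p : ℝ} (hp2 : p ≤ 1 / 2) :
    Real.log (32 * (2 + 2 / (1 - p))) ≤ 8 := by
  have factor_le : 32 * (2 + 2 / (1 - p)) ≤ 2 ^ 8 := by
    have : 2 / (1 - p) ≤ 4 := by rw [div_le_iff₀] <;> linarith
    linarith
  have factor_pos : 0 < 32 * (2 + 2 / (1 - p)) := by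
    have : 0 < 1 - p := by linarith
    positivity
  calc Real.log (32 * (2 + 2 / (1 - p)))
      ≤ Real.log (2 ^ 8) := Real.log_le_log factor_pos factor_le
    _ = 8 * Real.log 2 := by rw [Real.log_pow]; norm_num
    _ ≤ 8 := by linarith [Real.log_two_lt_d9]

lemma one_sub_div_mul_lt_lowWeight {p K : ℝ} (hp : 0 < p) (hp1 : p < 1) (d : ℕ)
    {f : (Fin n → Bool) → ℝ} (hf : ∀ x, f x = 0 ∨ f x = 1) (hI : p * totalInf p f < K * Ep p f) :
    (1 - K / (d + 1)) * Ep p f < lowWeight p d f := by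
  have tail := (succ_mul_sub_lowWeight_le_mul_totalInf hp hp1 d hf).trans_lt hI
  have : Ep p f - lowWeight p d f < K * Ep p f / (d + 1) := by
    rw [lt_div_iff₀ (by positivity)]
    linarith
  linarith [div_mul_eq_mul_div K (d + 1) (Ep p f)]

lemma exists_one_sub_div_pow_three_le_restrict1 {p K : ℝ} (hp : 0 < p) (hp1 : p < 1) {d : ℕ}
    (hKd : K ≤ d + 1) {f : (Fin n → Bool) → ℝ} (hf : ∀ x, f x = 0 ∨ f x = 1) (hμ : 0 < Ep p f)
    (hI : p * totalInf p f < K * Ep p f) :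
    ∃ J : Finset (Fin n), #J ≤ d ∧
      (1 - K / (d + 1)) ^ 3 ≤ (32 * (2 + 2 / (1 - p))) ^ d * Ep p (restrict1 J f) := by
  have hf_sq (x : Fin n → Bool) : f x ^ 2 = f x := by rcases hf x with h | h <;> simp [h]
  obtain ⟨J, hJ, lowWeight_le⟩ := exists_lowWeight_pow_three_le_restrict1 hp hp1 d hf_sq
  refine ⟨J, hJ, le_of_mul_le_mul_right (le_trans ?_ lowWeight_le) (pow_pos hμ 3)⟩
  have : 0 ≤ 1 - K / (d + 1) := sub_nonneg.2 ((div_le_one (by positivity)).2 hKd)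
  rw [← mul_pow]
  gcongr
  exact (one_sub_div_mul_lt_lowWeight hp hp1 d hf hI).le

theorem statement11_general {p K : ℝ} {f : (Fin n → Bool) → ℝ} (hp : 0 < p) (hp1 : p < 1)
    (hf : ∀ x, f x = 0 ∨ f x = 1) (hI : p * totalInf p f < K * Ep p f) :
    ∃ J : Finset (Fin n), (#J : ℝ) ≤ 2 * K ∧
      Real.exp (-((6 + 2 * Real.log (32 * (2 + 2 / (1 - p)))) * K)) ≤ Ep p (restrict1 J f) := by
  have hμ : 0 ≤ Ep p f := Ep_nonneg hp.le hp1.le fun x => by rcases hf x with h | h <;> simp [h]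
  have hKμ : 0 < K * Ep p f := (mul_nonneg hp.le (totalInf_nonneg hp.le hp1.le f)).trans_lt hI
  have hK : 0 < K := pos_of_mul_pos_left hKμ hμ
  have hM1 : 1 ≤ 32 * (2 + 2 / (1 - p)) := by
    linarith [div_nonneg zero_le_two (sub_nonneg.2 hp1.le)]
  set M : ℝ := 32 * (2 + 2 / (1 - p))
  set d := ⌊2 * K⌋₊
  have hd : (d : ℝ) ≤ 2 * K := Nat.floor_le (by positivity)
  have hKd : 2 * K ≤ d + 1 := (Nat.lt_floor_add_one _).le
  obtain ⟨J, hJ, cube_le⟩ := exists_one_sub_div_pow_three_le_restrict1 hp hp1 (d := d)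
    (by linarith) hf (pos_of_mul_pos_right hKμ hK.le) hI
  refine ⟨J, (Nat.cast_le.2 hJ).trans hd, ?_⟩
  have pow_le_exp : M ^ d ≤ Real.exp (2 * Real.log M * K) := by
    rw [← Real.rpow_natCast, Real.rpow_def_of_pos (by linarith), Real.exp_le_exp]
    nlinarith [Real.log_nonneg hM1]
  calc Real.exp (-((6 + 2 * Real.log M) * K))
      = Real.exp (-(6 * K)) / Real.exp (2 * Real.log M * K) := by
        rw [← Real.exp_sub]; ring_nf
    _ ≤ Real.exp (-(6 * K)) / M ^ d := by gcongr
    _ ≤ Ep p (restrict1 J f) := (div_le_iff₀' (by positivity)).2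
        ((exp_neg_six_mul_le_one_sub_div_pow_three hK.le hKd).trans cube_le)

/-- a variant of the Kahn--Kalai conjecture (Theorem 1.5). -/
theorem statement11 :
    ∃ C : ℝ, 1 ≤ C ∧
      ∀ (n : ℕ) (p K : ℝ) (f : (Fin n → Bool) → ℝ),
        0 < p → p ≤ 1/2 → 1 ≤ K → (∀ x, f x = 0 ∨ f x = 1) →
        p * totalInf p f < K * Ep p f →
        ∃ J : Finset (Fin n), (J.card : ℝ) ≤ C * K ∧
          Real.exp (-(C * K)) ≤ Ep p (restrict1 J f) := by
  refine ⟨22, by norm_num, fun n p K f hp hp2 hK hf hI => ?_⟩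
  obtain ⟨J, hJ, hJf⟩ := statement11_general hp (by linarith) hf hI
  refine ⟨J, by linarith, (Real.exp_le_exp.2 ?_).trans hJf⟩
  nlinarith [log_hypercontractive_factor_le hp2]

end GlobalHC
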